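/- First-order Lie transform remainder estimate: Let j₀, N ∈ ℕ, r > 2 and 0 < σ < r/2. Let W be a formal Hamiltonian with W(n) = 0 whenever supp n ⊄ A(j₀,N), and let U be a formal Hamiltonian with ‖U‖_{j₀,N,r} < ∞. If (e/σ)·‖W‖_{j₀,N,r} ≤ 1/2, then ‖T_W U − U‖_{j₀,N,r−σ} ≤ (e/σ)·‖W‖_{j₀,N,r}·‖U‖_{j₀,N,r}. -/

import Mathlib

/-!
The estimate rests on one bracket bound: if `W` is supported in the annulus, then
`‖{U, W}‖_s ≤ δ⁻¹ ‖U‖_{s+δ} ‖W‖_{s+δ}` for `s ≥ 1` and `δ > 0` (`hnorm_bracket_le`).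
A pair of monomials `n`, `m` contributing to the coefficient at `l` through the site `k` has `k` in
both supports, so `deg l = deg n + deg m - 2` and `Δ(l) ≤ Δ(n) + Δ(m)`, and `k` lies in the annulus
because `supp m` does; hence `n` is counted by the norm of `U`. With `a = Δ(n) + deg n - 1` and
`b = Δ(m) + deg m - 1`, the weight of `l` is at most `(a + b) s^(a+b-1)`, which Bernoulli's
inequality bounds by `δ⁻¹ (s+δ)^(a+b)`. The combinatorial coefficients are summed over `k` using
`∑_k |n_k m'_k - n'_k m_k| ≤ deg n * deg m`.

Applying the bracket bound `i` times with `δ = σ / i` gives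
`‖U⁽ⁱ⁾‖_{r-σ} / i! ≤ (iⁱ / i!) (‖W‖_r / σ)ⁱ ‖U‖_r ≤ ½ xⁱ ‖U‖_r`, where `x = (e/σ) ‖W‖_r ≤ 1/2` and
`2 iⁱ / i! ≤ eⁱ` for `i ≥ 1`. The factor `½` is what makes the geometric series over `i ≥ 1` sum to
at most `x ‖U‖_r`. All sums are taken in `ℝ≥0∞`, so no separate convergence argument is needed for
the brackets, nor for the Lie series: where the absolute series diverges the bound is trivial.
-/

open Classical MeasureTheory
open scoped BigOperators ENNReal NNReal

noncomputable section

namespace QPNLS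

abbrev Lat (d : ℕ) := Fin d → ℤ

def jnorm {d : ℕ} (j : Lat d) : ℝ := Real.sqrt (∑ i, ((j i : ℝ))^2)

abbrev Mono (d : ℕ) := (Lat d →₀ ℕ) × (Lat d →₀ ℕ)

abbrev FormalHam (d : ℕ) := Mono d → ℂ

def msupp {d : ℕ} (n : Mono d) : Finset (Lat d) := n.1.support ∪ n.2.support

def diam {d : ℕ} (n : Mono d) : ℝ :=
  (((msupp n ×ˢ msupp n).sup fun p => (jnorm (p.1 - p.2)).toNNReal) : ℝ≥0)

def deg {d : ℕ} (n : Mono d) : ℕ := (∑ j ∈ n.1.support, n.1 j) + (∑ j ∈ n.2.support, n.2 j)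

def inBarrier {d : ℕ} (j₀ N : ℝ) (n : Mono d) : Prop :=
  ∃ j ∈ msupp n, |jnorm j - j₀| ≤ N

def suppInBarrier {d : ℕ} (j₀ N : ℝ) (n : Mono d) : Prop :=
  ∀ j ∈ msupp n, |jnorm j - j₀| ≤ N

def hnorm {d : ℕ} (j₀ N r : ℝ) (W : FormalHam d) : ℝ≥0∞ :=
  ∑' n : Mono d, if inBarrier j₀ N n then
    (‖W n‖₊ : ℝ≥0∞) * (deg n : ℝ≥0∞) * ENNReal.ofReal (r ^ (diam n + (deg n : ℝ) - 1)) else 0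

def bracketTerm {d : ℕ} (W U : FormalHam d) (l : Mono d) (p : Lat d × Mono d × Mono d) : ℂ :=
  if (∀ j : Lat d, (p.2.1.1 j : ℤ) + (p.2.2.1 j : ℤ) - (if j = p.1 then 1 else 0) = (l.1 j : ℤ))
     ∧ (∀ j : Lat d, (p.2.1.2 j : ℤ) + (p.2.2.2 j : ℤ) - (if j = p.1 then 1 else 0) = (l.2 j : ℤ))
  then W p.2.1 * U p.2.2 *
    (((p.2.1.1 p.1 * p.2.2.2 p.1 : ℤ) - (p.2.1.2 p.1 * p.2.2.1 p.1 : ℤ) : ℤ) : ℂ)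
  else 0

def bracket {d : ℕ} (W U : FormalHam d) : FormalHam d :=
  fun l => Complex.I * ∑' p : Lat d × Mono d × Mono d, bracketTerm W U l p

def BracketAbsConv {d : ℕ} (W U : FormalHam d) : Prop :=
  ∀ l : Mono d, Summable (fun p : Lat d × Mono d × Mono d => ‖bracketTerm W U l p‖)

def adIter {d : ℕ} (W U : FormalHam d) : ℕ → FormalHam d
  | 0 => U
  | (i+1) => bracket (adIter W U i) W

def lieTransform {d : ℕ} (W U : FormalHam d) : FormalHam d :=
  fun l => ∑' i : ℕ, ((Nat.factorial i : ℂ))⁻¹ * adIter W U i l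

def LieAbsConv {d : ℕ} (W U : FormalHam d) : Prop :=
  (∀ i : ℕ, BracketAbsConv (adIter W U i) W) ∧
  ∀ l : Mono d, Summable (fun i : ℕ => ((Nat.factorial i : ℝ))⁻¹ * ‖adIter W U i l‖)

def IsResonant {d : ℕ} (n : Mono d) : Prop := n.1 = n.2

def freqSum {d : ℕ} (V : Lat d → ℝ) (n : Mono d) : ℝ :=
  ∑ j ∈ msupp n, ((n.1 j : ℝ) - (n.2 j : ℝ)) * V j

def slicedNorm {d : ℕ} (j₀ N r : ℝ) (A : ℕ) (Z R : FormalHam d) : ℝ≥0∞ :=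
  ∑' n : Mono d, if diam n + (deg n : ℝ) = (A : ℝ) ∧ inBarrier j₀ N n then
    ((‖Z n‖₊ + ‖R n‖₊ : ℝ≥0) : ℝ≥0∞) * (deg n : ℝ≥0∞) *
      ENNReal.ofReal (r ^ (diam n + (deg n : ℝ) - 1)) else 0

def pot {d : ℕ} (Γ : Finset (Lat d)) (v : Lat d → ℝ) (θ α : Fin d → ℝ) (j : Lat d) : ℝ :=
  ∑ ℓ ∈ Γ, v ℓ * Real.cos (2 * Real.pi * ∑ i, (ℓ i : ℝ) * (θ i + (j i : ℝ) * α i))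

def diamZ {d : ℕ} (k : Lat d →₀ ℤ) : ℝ :=
  (((k.support ×ˢ k.support).sup fun p => (jnorm (p.1 - p.2)).toNNReal) : ℝ≥0)

def norm1Z {d : ℕ} (k : Lat d →₀ ℤ) : ℕ := ∑ j ∈ k.support, (k j).natAbs

def Nonresonant {d : ℕ} (ω : Lat d → ℝ) (γ : ℝ) (L M j₀ : ℕ) : Prop :=
  ∀ k : Lat d →₀ ℤ, k ≠ 0 →
    (∃ j ∈ k.support, |jnorm j - (j₀ : ℝ)| ≤ (M : ℝ)^2) →
    diamZ k + (norm1Z k : ℝ) ≤ (M : ℝ) + 2 →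
    (γ / (2 * (L : ℝ) * (M : ℝ)^2 * (j₀ : ℝ)) ^ (2 * (d + 1))) ^ (10 * L^4 * M^4) ≤
      |∑ j ∈ k.support, (k j : ℝ) * ω j|

def Dham {d : ℕ} (V : Lat d → ℝ) : FormalHam d :=
  fun n => if h : ∃ j : Lat d, n = (Finsupp.single j 1, Finsupp.single j 1)
    then ((V h.choose / 2 : ℝ) : ℂ) else 0

def Z1ham {d : ℕ} (ε₂ : ℝ) : FormalHam d :=
  fun n => if ∃ j : Lat d, n = (Finsupp.single j 2, Finsupp.single j 2)
    then ((ε₂ / 4 : ℝ) : ℂ) else 0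

def R1ham {d : ℕ} (ε₁ : ℝ) : FormalHam d :=
  fun n => if ∃ i j : Lat d, (∑ a, ((i - j) a).natAbs) = 1 ∧
      n = (Finsupp.single i 1, Finsupp.single j 1)
    then ((ε₁ / 2 : ℝ) : ℂ) else 0

def H1 {d : ℕ} (V : Lat d → ℝ) (ε₁ ε₂ : ℝ) : FormalHam d :=
  fun n => Dham V n + Z1ham ε₂ n + R1ham ε₁ n

def Hseq {d : ℕ} (H : FormalHam d) (F : ℕ → FormalHam d) : ℕ → FormalHam d
  | 0 => H
  | (i+1) => lieTransform (F i) (Hseq H F i)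

end QPNLS

namespace QPNLS

/-! ### Lattice norm, degree and diameter -/

lemma jnorm_eq_norm {d : ℕ} (j : Lat d) :
    jnorm j = ‖(WithLp.toLp 2 (fun i => (j i : ℝ)) : EuclideanSpace ℝ (Fin d))‖ := by
  simp [jnorm, EuclideanSpace.norm_eq]

lemma jnorm_sub_le {d : ℕ} (a b c : Lat d) :
    jnorm (a - c) ≤ jnorm (a - b) + jnorm (b - c) := by
  simp only [jnorm_eq_norm]
  refine le_trans (le_of_eq ?_) (norm_add_le _ _)
  congr 1
  ext i
  simp

lemma jnorm_sub_comm {d : ℕ} (a b : Lat d) : jnorm (a - b) = jnorm (b - a) := by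
  unfold jnorm
  congr 1
  refine Finset.sum_congr rfl fun i _ => ?_
  simp only [Pi.sub_apply]
  push_cast
  ring

lemma jnorm_nonneg {d : ℕ} (j : Lat d) : 0 ≤ jnorm j := Real.sqrt_nonneg _

lemma diam_nonneg {d : ℕ} (n : Mono d) : 0 ≤ diam n := NNReal.coe_nonneg _

lemma jnorm_le_diam {d : ℕ} {n : Mono d} {a b : Lat d} (ha : a ∈ msupp n) (hb : b ∈ msupp n) :
    jnorm (a - b) ≤ diam n := by
  have h : (jnorm (a - b)).toNNReal ≤
      (msupp n ×ˢ msupp n).sup fun p => (jnorm (p.1 - p.2)).toNNReal :=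
    Finset.le_sup (f := fun p : Lat d × Lat d => (jnorm (p.1 - p.2)).toNNReal)
      (b := (a, b)) (Finset.mk_mem_product ha hb)
  rw [← Real.coe_toNNReal _ (jnorm_nonneg (a - b))]
  exact NNReal.coe_le_coe.2 h

lemma diam_le {d : ℕ} {n : Mono d} {c : ℝ} (hc : 0 ≤ c)
    (h : ∀ a ∈ msupp n, ∀ b ∈ msupp n, jnorm (a - b) ≤ c) : diam n ≤ c := by
  rw [← Real.coe_toNNReal c hc]
  refine NNReal.coe_le_coe.2 (Finset.sup_le fun p hp => ?_)
  rw [Finset.mem_product] at hp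
  exact Real.toNNReal_le_toNNReal (h _ hp.1 _ hp.2)

lemma diam_le_add {d : ℕ} {l n m : Mono d} {k : Lat d} (hkn : k ∈ msupp n) (hkm : k ∈ msupp m)
    (hl : msupp l ⊆ msupp n ∪ msupp m) : diam l ≤ diam n + diam m := by
  have hn := diam_nonneg n
  have hm := diam_nonneg m
  refine diam_le (by positivity) fun a ha b hb => ?_
  have hab := jnorm_sub_le a k b
  rcases Finset.mem_union.1 (hl ha) with ha | ha <;> rcases Finset.mem_union.1 (hl hb) with hb | hb
  · have := jnorm_le_diam ha hb
    linarith
  · have := jnorm_le_diam ha hkn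
    have := jnorm_le_diam hkm hb
    linarith
  · have := jnorm_le_diam ha hkm
    have := jnorm_le_diam hkn hb
    linarith
  · have := jnorm_le_diam ha hb
    linarith

lemma deg_eq_degree {d : ℕ} (n : Mono d) : deg n = n.1.degree + n.2.degree := rfl

lemma mem_msupp {d : ℕ} {n : Mono d} {k : Lat d} : k ∈ msupp n ↔ n.1 k ≠ 0 ∨ n.2 k ≠ 0 := by
  simp [msupp]

lemma le_deg {d : ℕ} (n : Mono d) (k : Lat d) : n.1 k + n.2 k ≤ deg n := by
  rw [deg_eq_degree]
  exact add_le_add (Finsupp.le_degree k n.1) (Finsupp.le_degree k n.2)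

lemma one_le_deg {d : ℕ} {n : Mono d} {k : Lat d} (hk : k ∈ msupp n) : 1 ≤ deg n := by
  have := le_deg n k
  rw [mem_msupp] at hk
  omega

lemma tsum_degree {d : ℕ} (f : Lat d →₀ ℕ) :
    ∑' k, (f k : ℝ≥0∞) = ((f.degree : ℕ) : ℝ≥0∞) := by
  rw [tsum_eq_sum (s := f.support), Finsupp.degree_apply]
  · push_cast
    rfl
  · intro b hb
    simpa using hb

/-- Coefficients of the bracket, summed over the contracted site. -/
lemma tsum_coeff_le {d : ℕ} (n m : Mono d) :
    ∑' k : Lat d, ‖(((n.1 k * m.2 k : ℤ) - (n.2 k * m.1 k : ℤ) : ℤ) : ℂ)‖ₑ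
      ≤ (deg n : ℝ≥0∞) * (deg m : ℝ≥0∞) := by
  have hsum : (deg n : ℝ≥0∞) = ∑' k : Lat d, ((n.1 k : ℝ≥0∞) + (n.2 k : ℝ≥0∞)) := by
    rw [ENNReal.tsum_add, tsum_degree, tsum_degree, deg_eq_degree]
    push_cast
    rfl
  rw [hsum, ← ENNReal.tsum_mul_right]
  refine ENNReal.tsum_le_tsum fun k => ?_
  have hm : m.1 k + m.2 k ≤ deg m := le_deg m k
  have h1 : ((n.1 k * m.2 k : ℤ) - (n.2 k * m.1 k : ℤ) : ℤ).natAbs ≤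
      (n.1 k + n.2 k) * deg m := by
    have h2 : (n.1 k + n.2 k) * (m.1 k + m.2 k) ≤ (n.1 k + n.2 k) * deg m :=
      Nat.mul_le_mul_left _ hm
    have h3 : ((n.1 k * m.2 k : ℤ) - (n.2 k * m.1 k : ℤ) : ℤ).natAbs ≤
        n.1 k * m.2 k + n.2 k * m.1 k := by
      refine (Int.natAbs_sub_le _ _).trans (le_of_eq ?_)
      simp [Int.natAbs_mul]
    nlinarith [Nat.zero_le (n.1 k * m.1 k), Nat.zero_le (n.2 k * m.2 k)]
  have h4 : ∀ z : ℤ, ‖(z : ℂ)‖ₑ = (z.natAbs : ℝ≥0∞) := by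
    intro z
    rw [← ofReal_norm, Complex.norm_intCast, ← Int.cast_abs, Int.abs_eq_natAbs,
      Int.cast_natCast, ENNReal.ofReal_natCast]
  rw [h4]
  exact_mod_cast h1

/-! ### The bracket bound -/

/-- Bernoulli's inequality in the form that trades a derivative in `s` for a shift by `δ`. -/
lemma mul_rpow_sub_one_le {s δ t : ℝ} (hs : 0 < s) (hδ : 0 < δ) (ht : 1 ≤ t) :
    t * s ^ (t - 1) ≤ δ⁻¹ * (s + δ) ^ t := by
  have h := one_add_mul_self_le_rpow_one_add (s := δ / s) (p := t)
    (by have := div_pos hδ hs; linarith) ht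
  have e : s + δ = s * (1 + δ / s) := by field_simp
  rw [e, Real.mul_rpow hs.le (by positivity), Real.rpow_sub_one hs.ne', inv_mul_eq_div,
    le_div_iff₀ hδ]
  have hst : 0 < s ^ t := Real.rpow_pos_of_pos hs t
  calc t * (s ^ t / s) * δ = s ^ t * (t * (δ / s)) := by ring
    _ ≤ s ^ t * (1 + δ / s) ^ t := by gcongr; linarith

lemma hnorm_mono {d : ℕ} {j₀ N s s' : ℝ} (hs : 1 ≤ s) (hss : s ≤ s') (W : FormalHam d) :
    hnorm j₀ N s W ≤ hnorm j₀ N s' W := by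
  refine ENNReal.tsum_le_tsum fun n => ?_
  split_ifs with h
  · obtain ⟨j, hj, -⟩ := h
    have h1 : (1 : ℝ) ≤ deg n := by exact_mod_cast one_le_deg hj
    have := diam_nonneg n
    gcongr
    linarith
  · exact le_rfl

/-- The contraction relation `n + m - e_k = l` in both components, under which the pair `(n, m)`
contributes to the coefficient at `l` of a bracket through the site `k`. -/
def Contracts {d : ℕ} (k : Lat d) (n m l : Mono d) : Prop :=
  (∀ j : Lat d, (n.1 j : ℤ) + (m.1 j : ℤ) - (if j = k then 1 else 0) = (l.1 j : ℤ))
     ∧ (∀ j : Lat d, (n.2 j : ℤ) + (m.2 j : ℤ) - (if j = k then 1 else 0) = (l.2 j : ℤ))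

lemma Contracts.unique {d : ℕ} {k : Lat d} {n m l l' : Mono d} (h : Contracts k n m l)
    (h' : Contracts k n m l') : l = l' := by
  refine Prod.ext (Finsupp.ext fun j => ?_) (Finsupp.ext fun j => ?_)
  · have := h.1 j
    have := h'.1 j
    omega
  · have := h.2 j
    have := h'.2 j
    omega

lemma Contracts.deg_add {d : ℕ} {k : Lat d} {n m l : Mono d} (h : Contracts k n m l) :
    deg l + 2 = deg n + deg m := by
  have h1 : n.1 + m.1 = l.1 + Finsupp.single k 1 := by
    ext j
    have := h.1 j
    simp only [Finsupp.add_apply, Finsupp.single_apply, eq_comm (a := k)]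
    split_ifs at * <;> omega
  have h2 : n.2 + m.2 = l.2 + Finsupp.single k 1 := by
    ext j
    have := h.2 j
    simp only [Finsupp.add_apply, Finsupp.single_apply, eq_comm (a := k)]
    split_ifs at * <;> omega
  have e1 := congrArg Finsupp.degree h1
  have e2 := congrArg Finsupp.degree h2
  simp only [map_add, Finsupp.degree_single] at e1 e2
  simp only [deg_eq_degree]
  omega

lemma Contracts.msupp_subset {d : ℕ} {k : Lat d} {n m l : Mono d} (h : Contracts k n m l) :
    msupp l ⊆ msupp n ∪ msupp m := by
  intro j hj
  have h1 := h.1 j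
  have h2 := h.2 j
  rw [Finset.mem_union, mem_msupp, mem_msupp]
  rw [mem_msupp] at hj
  split_ifs at * <;> omega

/-- The weight of `l` is controlled by the product of the weights of the two contracted
monomials. -/
lemma Contracts.weight_le {d : ℕ} {k : Lat d} {n m l : Mono d} (h : Contracts k n m l)
    (hkn : k ∈ msupp n) (hkm : k ∈ msupp m) (hl : 1 ≤ deg l) {s δ : ℝ} (hs : 1 ≤ s) (hδ : 0 < δ) :
    (deg l : ℝ) * s ^ (diam l + (deg l : ℝ) - 1) ≤
      δ⁻¹ * ((s + δ) ^ (diam n + (deg n : ℝ) - 1) * (s + δ) ^ (diam m + (deg m : ℝ) - 1)) := by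
  have hd : diam l ≤ diam n + diam m := diam_le_add hkn hkm h.msupp_subset
  have hdeg : (deg l : ℝ) + 2 = deg n + deg m := by exact_mod_cast h.deg_add
  have hl' : (1 : ℝ) ≤ deg l := by exact_mod_cast hl
  have hn := diam_nonneg n
  have hm := diam_nonneg m
  rw [← Real.rpow_add (by linarith)]
  refine le_trans ?_ (mul_rpow_sub_one_le (by linarith) hδ (by linarith))
  exact mul_le_mul (by linarith) (Real.rpow_le_rpow_of_exponent_le hs (by linarith))
    (by positivity) (by linarith)

lemma hnorm_bracket_le {d : ℕ} {j₀ N s δ : ℝ} (hs : 1 ≤ s) (hδ : 0 < δ) (U W : FormalHam d)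
    (hW : ∀ n : Mono d, ¬ suppInBarrier j₀ N n → W n = 0) :
    hnorm j₀ N s (bracket U W) ≤
      ENNReal.ofReal δ⁻¹ * hnorm j₀ N (s + δ) W * hnorm j₀ N (s + δ) U := by
  -- `u n` and `w m` are the summands of the norms on the right without their degree factors.
  set E : Mono d → ℝ≥0∞ := fun n => ENNReal.ofReal ((s + δ) ^ (diam n + (deg n : ℝ) - 1)) with hE
  set u : Mono d → ℝ≥0∞ := fun n => if inBarrier j₀ N n then ‖U n‖ₑ * E n else 0 with hu
  set w : Mono d → ℝ≥0∞ := fun n => if inBarrier j₀ N n then ‖W n‖ₑ * E n else 0 with hw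
  set c : Mono d → Mono d → Lat d → ℝ≥0∞ := fun n m k =>
    ‖(((n.1 k * m.2 k : ℤ) - (n.2 k * m.1 k : ℤ) : ℤ) : ℂ)‖ₑ with hc
  set g : Mono d → Lat d × Mono d × Mono d → ℝ≥0∞ := fun l p =>
    if inBarrier j₀ N l then ‖bracketTerm U W l p‖ₑ *
      ((deg l : ℝ≥0∞) * ENNReal.ofReal (s ^ (diam l + (deg l : ℝ) - 1))) else 0 with hg
  have hterm : ∀ l p, g l p ≤ ENNReal.ofReal δ⁻¹ * (c p.2.1 p.2.2 p.1 * (u p.2.1 * w p.2.2)) := by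
    rintro l ⟨k, n, m⟩
    simp only [hg]
    split_ifs with hlB
    swap
    · exact zero_le
    by_cases h0 : bracketTerm U W l (k, n, m) = 0
    · simp [h0]
    have hC : Contracts k n m l := by
      by_contra hC
      exact h0 (if_neg hC)
    have hval : bracketTerm U W l (k, n, m) = U n * W m *
        (((n.1 k * m.2 k : ℤ) - (n.2 k * m.1 k : ℤ) : ℤ) : ℂ) := if_pos hC
    rw [hval] at h0 ⊢
    have hWm : W m ≠ 0 := by
      intro h
      simp [h] at h0
    have hcoef : ((n.1 k * m.2 k : ℤ) - (n.2 k * m.1 k : ℤ) : ℤ) ≠ 0 := by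
      intro h
      rw [h] at h0
      simp at h0
    have hk : k ∈ msupp n ∧ k ∈ msupp m := by
      rw [mem_msupp, mem_msupp]
      by_contra hcon
      apply hcoef
      by_cases a : n.1 k = 0 <;> by_cases b : n.2 k = 0 <;> by_cases a' : m.1 k = 0 <;>
        by_cases b' : m.2 k = 0 <;> simp_all
    have hkB : |jnorm k - j₀| ≤ N := by
      by_contra hcon
      exact hWm (hW m fun hs => hcon (hs k hk.2))
    have hnB : inBarrier j₀ N n := ⟨k, hk.1, hkB⟩
    have hmB : inBarrier j₀ N m := ⟨k, hk.2, hkB⟩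
    obtain ⟨j, hj, -⟩ := hlB
    have hwt := ENNReal.ofReal_le_ofReal (hC.weight_le hk.1 hk.2 (one_le_deg hj) hs hδ)
    rw [ENNReal.ofReal_mul (by positivity), ENNReal.ofReal_natCast,
      ENNReal.ofReal_mul (by positivity), ENNReal.ofReal_mul (by positivity)] at hwt
    simp only [hu, hw, hc, hE, if_pos hnB, if_pos hmB, enorm_mul]
    refine (mul_le_mul_right hwt _).trans (le_of_eq ?_)
    ring
  have hinner : ∀ p : Lat d × Mono d × Mono d, ∑' l, g l p ≤
      ENNReal.ofReal δ⁻¹ * (c p.2.1 p.2.2 p.1 * (u p.2.1 * w p.2.2)) := by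
    -- At most one `l` contributes, since `l` is determined by `k`, `n`, `m`.
    intro p
    have hzero : ∀ l, ¬ Contracts p.1 p.2.1 p.2.2 l → g l p = 0 := by
      intro l hl
      have : bracketTerm U W l p = 0 := if_neg hl
      simp [hg, this]
    by_cases hex : ∃ l, Contracts p.1 p.2.1 p.2.2 l
    · obtain ⟨l, hl⟩ := hex
      rw [tsum_eq_single l fun l' hl' => hzero l' fun h => hl' (h.unique hl)]
      exact hterm l p
    · push Not at hex
      simp [fun l => hzero l (hex l)]
  have hUn : hnorm j₀ N (s + δ) U = ∑' n, u n * deg n := by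
    refine tsum_congr fun n => ?_
    simp only [hu, hE, ite_mul, zero_mul]
    refine if_congr Iff.rfl ?_ rfl
    rw [mul_right_comm]
    rfl
  have hWn : hnorm j₀ N (s + δ) W = ∑' n, w n * deg n := by
    refine tsum_congr fun n => ?_
    simp only [hw, hE, ite_mul, zero_mul]
    refine if_congr Iff.rfl ?_ rfl
    rw [mul_right_comm]
    rfl
  calc hnorm j₀ N s (bracket U W) ≤ ∑' l, ∑' p, g l p := by
        refine ENNReal.tsum_le_tsum fun l => ?_
        simp only [hg]
        split_ifs with hl
        · rw [ENNReal.tsum_mul_right, mul_assoc]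
          gcongr
          change ‖bracket U W l‖ₑ ≤ _
          rw [bracket, enorm_mul]
          have hI : ‖Complex.I‖ₑ = 1 := by simp [← ofReal_norm]
          rw [hI, one_mul]
          exact enorm_tsum_le_tsum_enorm
        · exact zero_le
    _ = ∑' p, ∑' l, g l p := ENNReal.tsum_comm
    _ ≤ ∑' p : Lat d × Mono d × Mono d,
          ENNReal.ofReal δ⁻¹ * (c p.2.1 p.2.2 p.1 * (u p.2.1 * w p.2.2)) :=
        ENNReal.tsum_le_tsum hinner
    _ = ENNReal.ofReal δ⁻¹ * ∑' n, ∑' m, (∑' k, c n m k) * (u n * w m) := by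
        rw [ENNReal.tsum_mul_left, ENNReal.tsum_prod', ENNReal.tsum_comm, ENNReal.tsum_prod']
        simp only [ENNReal.tsum_mul_right]
    _ ≤ ENNReal.ofReal δ⁻¹ * ∑' n, ∑' m, ((deg n : ℝ≥0∞) * deg m) * (u n * w m) := by
        gcongr with n m
        exact tsum_coeff_le n m
    _ = ENNReal.ofReal δ⁻¹ * ∑' n, (u n * deg n) * ∑' m, w m * deg m := by
        congr 1
        refine tsum_congr fun n => ?_
        rw [← ENNReal.tsum_mul_left]
        refine tsum_congr fun m => ?_
        ring
    _ = ENNReal.ofReal δ⁻¹ * hnorm j₀ N (s + δ) W * hnorm j₀ N (s + δ) U := by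
        rw [ENNReal.tsum_mul_right, ← hUn, ← hWn]
        ring

/-! ### Iterated brackets and the Lie series -/

lemma hnorm_adIter_le {d : ℕ} {j₀ N r δ : ℝ} (hδ : 0 < δ) (W U : FormalHam d)
    (hW : ∀ n : Mono d, ¬ suppInBarrier j₀ N n → W n = 0) (i : ℕ) (hi : 1 ≤ r - i * δ) :
    hnorm j₀ N (r - i * δ) (adIter W U i) ≤
      (ENNReal.ofReal δ⁻¹ * hnorm j₀ N r W) ^ i * hnorm j₀ N r U := by
  induction i with
  | zero => simp [adIter]
  | succ i ih =>
    have e : r - ((i + 1 : ℕ) : ℝ) * δ + δ = r - i * δ := by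
      push_cast
      ring
    have hi' : 1 ≤ r - i * δ := by linarith
    have hb := hnorm_bracket_le (j₀ := j₀) (N := N) hi hδ (adIter W U i) W hW
    rw [e] at hb
    have hWm : hnorm j₀ N (r - i * δ) W ≤ hnorm j₀ N r W :=
      hnorm_mono hi' (by have : 0 ≤ (i : ℝ) * δ := by positivity
                         linarith) W
    calc _ ≤ _ := hb
      _ ≤ ENNReal.ofReal δ⁻¹ * hnorm j₀ N r W *
          ((ENNReal.ofReal δ⁻¹ * hnorm j₀ N r W) ^ i * hnorm j₀ N r U) := by
        gcongr
        exact ih hi'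
      _ = _ := by ring

/-- In the exponential series at `k + 1`, the terms of index `k` and `k + 1` are equal, which gives
the factor `2`. -/
lemma two_mul_pow_div_factorial_le (k : ℕ) :
    2 * (((k + 1 : ℕ) : ℝ) ^ (k + 1) / (k + 1).factorial) ≤ Real.exp 1 ^ (k + 1) := by
  have h := Real.sum_le_exp_of_nonneg (x := ((k + 1 : ℕ) : ℝ)) (by positivity) (k + 2)
  rw [Finset.sum_range_succ, Finset.sum_range_succ] at h
  have h0 : 0 ≤ ∑ i ∈ Finset.range k, ((k + 1 : ℕ) : ℝ) ^ i / (i.factorial : ℝ) :=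
    Finset.sum_nonneg fun i _ => by positivity
  have e : ((k + 1 : ℕ) : ℝ) ^ (k + 1) / ((k + 1).factorial : ℝ) =
      ((k + 1 : ℕ) : ℝ) ^ k / (k.factorial : ℝ) := by
    rw [Nat.factorial_succ, pow_succ]
    push_cast
    field_simp
  rw [← Real.exp_nat_mul, mul_one]
  linarith

lemma hnorm_lie_term_le {d : ℕ} {j₀ N r σ : ℝ} (hr : 2 < r) (hσ : 0 < σ) (hσr : σ < r / 2)
    (W U : FormalHam d) (hW : ∀ n : Mono d, ¬ suppInBarrier j₀ N n → W n = 0) (k : ℕ) :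
    ‖((Nat.factorial (k + 1) : ℂ))⁻¹‖ₑ * hnorm j₀ N (r - σ) (adIter W U (k + 1)) ≤
      2⁻¹ * (ENNReal.ofReal (Real.exp 1 / σ) * hnorm j₀ N r W) ^ (k + 1) * hnorm j₀ N r U := by
  have hk : (0 : ℝ) < ((k + 1 : ℕ) : ℝ) := by positivity
  have hmul : ((k + 1 : ℕ) : ℝ) * (σ / ((k + 1 : ℕ) : ℝ)) = σ := by field_simp
  have h := hnorm_adIter_le (j₀ := j₀) (N := N) (r := r) (div_pos hσ hk) W U hW (k + 1)
    (by rw [hmul]; linarith)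
  rw [hmul] at h
  have hcoef : ‖((Nat.factorial (k + 1) : ℂ))⁻¹‖ₑ *
      ENNReal.ofReal (σ / ((k + 1 : ℕ) : ℝ))⁻¹ ^ (k + 1) ≤
      2⁻¹ * ENNReal.ofReal (Real.exp 1 / σ) ^ (k + 1) := by
    have e2 : (2⁻¹ : ℝ≥0∞) = ENNReal.ofReal 2⁻¹ := by
      rw [ENNReal.ofReal_inv_of_pos (by norm_num)]
      simp
    rw [← ofReal_norm, norm_inv, Complex.norm_natCast, e2,
      ← ENNReal.ofReal_pow (by positivity), ← ENNReal.ofReal_pow (by positivity),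
      ← ENNReal.ofReal_mul (by positivity), ← ENNReal.ofReal_mul (by positivity)]
    refine ENNReal.ofReal_le_ofReal ?_
    have hf := two_mul_pow_div_factorial_le k
    have hσk : 0 < σ ^ (k + 1) := by positivity
    rw [inv_div, div_pow, div_pow]
    calc _ = (((k + 1 : ℕ) : ℝ) ^ (k + 1) / (k + 1).factorial) / σ ^ (k + 1) := by ring
      _ ≤ (2⁻¹ * Real.exp 1 ^ (k + 1)) / σ ^ (k + 1) := by gcongr; linarith
      _ = _ := by ring
  calc _ ≤ ‖((Nat.factorial (k + 1) : ℂ))⁻¹‖ₑ * _ := mul_le_mul_right h _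
    _ = (‖((Nat.factorial (k + 1) : ℂ))⁻¹‖ₑ *
        ENNReal.ofReal (σ / ((k + 1 : ℕ) : ℝ))⁻¹ ^ (k + 1)) *
          (hnorm j₀ N r W ^ (k + 1) * hnorm j₀ N r U) := by
      rw [mul_pow]
      ring
    _ ≤ (2⁻¹ * ENNReal.ofReal (Real.exp 1 / σ) ^ (k + 1)) *
          (hnorm j₀ N r W ^ (k + 1) * hnorm j₀ N r U) := by gcongr
    _ = _ := by
      rw [mul_pow]
      ring

/-- No summability is assumed: a divergent right-hand side makes the bound trivial. -/
lemma enorm_tsum_sub_zero_le (f : ℕ → ℂ) :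
    ‖(∑' i, f i) - f 0‖ₑ ≤ ∑' i, ‖f (i + 1)‖ₑ := by
  by_cases htop : ∑' i, ‖f (i + 1)‖ₑ = ⊤
  · rw [htop]
    exact le_top
  · have h1 : Summable fun i => ‖f (i + 1)‖₊ := ENNReal.tsum_coe_ne_top_iff_summable.1 htop
    have h2 : Summable fun i => f (i + 1) := Summable.of_nnnorm h1
    rw [((summable_nat_add_iff 1).1 h2).tsum_eq_zero_add, add_sub_cancel_left]
    exact enorm_tsum_le_tsum_enorm

/-- First-order Lie transform remainder estimate. -/
theorem lie_transform_first_order_remainder {d : ℕ} (hd : 1 ≤ d) (j₀ N : ℕ) (r σ : ℝ)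
    (hr : 2 < r) (hσ : 0 < σ) (hσr : σ < r / 2)
    (W U : FormalHam d)
    (hWsupp : ∀ n : Mono d, ¬ suppInBarrier (j₀ : ℝ) (N : ℝ) n → W n = 0)
    (hUfin : hnorm (j₀ : ℝ) (N : ℝ) r U < ⊤)
    (hWsmall : ENNReal.ofReal (Real.exp 1 / σ) * hnorm (j₀ : ℝ) (N : ℝ) r W ≤ 1 / 2) :
    hnorm (j₀ : ℝ) (N : ℝ) (r - σ) (fun l => lieTransform W U l - U l) ≤
      ENNReal.ofReal (Real.exp 1 / σ) * hnorm (j₀ : ℝ) (N : ℝ) r W *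
        hnorm (j₀ : ℝ) (N : ℝ) r U := by
  set x := ENNReal.ofReal (Real.exp 1 / σ) * hnorm (j₀ : ℝ) (N : ℝ) r W with hx
  calc hnorm (j₀ : ℝ) (N : ℝ) (r - σ) (fun l => lieTransform W U l - U l)
      ≤ ∑' k : ℕ, ‖((Nat.factorial (k + 1) : ℂ))⁻¹‖ₑ *
          hnorm (j₀ : ℝ) (N : ℝ) (r - σ) (adIter W U (k + 1)) := by
        simp only [hnorm, ← ENNReal.tsum_mul_left]
        rw [ENNReal.tsum_comm]
        refine ENNReal.tsum_le_tsum fun l => ?_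
        split_ifs with hl
        · simp only [← mul_assoc]
          rw [ENNReal.tsum_mul_right, ENNReal.tsum_mul_right]
          gcongr
          have h := enorm_tsum_sub_zero_le
            fun i => ((Nat.factorial i : ℂ))⁻¹ * adIter W U i l
          simp only [enorm_mul, Nat.factorial_zero, Nat.cast_one, inv_one, one_mul] at h
          exact h
        · exact zero_le
    _ ≤ ∑' k : ℕ, 2⁻¹ * x ^ (k + 1) * hnorm (j₀ : ℝ) (N : ℝ) r U :=
        ENNReal.tsum_le_tsum fun k => hnorm_lie_term_le hr hσ hσr W U hWsupp k
    _ = 2⁻¹ * (x * (1 - x)⁻¹) * hnorm (j₀ : ℝ) (N : ℝ) r U := by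
        rw [ENNReal.tsum_mul_right, ENNReal.tsum_mul_left, ENNReal.tsum_geometric_add_one]
    _ ≤ 2⁻¹ * (x * 2) * hnorm (j₀ : ℝ) (N : ℝ) r U := by
        gcongr
        rw [ENNReal.inv_le_iff_inv_le]
        refine ENNReal.le_sub_of_add_le_left (ne_top_of_le_ne_top (by simp) hWsmall) ?_
        calc x + 2⁻¹ ≤ 2⁻¹ + 2⁻¹ := by
              gcongr
              simpa using hWsmall
          _ = 1 := ENNReal.inv_two_add_inv_two
    _ = x * hnorm (j₀ : ℝ) (N : ℝ) r U := by
        rw [mul_comm x 2, ← mul_assoc, ENNReal.inv_mul_cancel (by simp) (by simp), one_mul]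

end QPNLS
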